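/- (Quantum Shearer inequality, special case of full cover) Let ρ be a density matrix on n qubits and let F be the family of all subsets of {1,…,n} of a fixed size k ≥ 1; each index i lies in exactly t = C(n−1, k−1) elements of F. Then S(ρ) ≤ (1/t) · Σ_{F ∈ F} S(ρ|_F), where ρ|_F is the reduced density matrix on the qubits in F. -/

import Mathlib

open Matrix
open scoped ComplexOrder

/-- von Neumann entropy of a (Hermitian) matrix, via its eigenvalues. -/
noncomputable def vnEntropy {ι : Type*} [Fintype ι] [DecidableEq ι]
    (M : Matrix ι ι ℂ) : ℝ :=
  if h : M.IsHermitian then -∑ i, h.eigenvalues i * Real.log (h.eigenvalues i) else 0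

/-- The reduced density matrix `ρ|_F` of an `n`-qubit state on the qubits in `F`
(partial trace over the complement of `F`). -/
noncomputable def reducedMat {n : ℕ} (F : Finset (Fin n))
    (ρ : Matrix (Fin n → Fin 2) (Fin n → Fin 2) ℂ) :
    Matrix ({i : Fin n // i ∈ F} → Fin 2) ({i : Fin n // i ∈ F} → Fin 2) ℂ :=
  Matrix.of fun x y =>
    ∑ z : {i : Fin n // i ∉ F} → Fin 2,
      ρ (fun i => if h : i ∈ F then x ⟨i, h⟩ else z ⟨i, h⟩)
        (fun i => if h : i ∈ F then y ⟨i, h⟩ else z ⟨i, h⟩)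

/-!
The entropy of the marginals of `ρ` is a submodular function of the set of sites. For submodular
`f` and sets `A j` covering each site exactly `r` times, adding the sites to `U` one at a time
gives `r (f U - f ∅) ≤ ∑ j, (f (A j ∩ U) - f ∅)`: when `i` joins `U`, each of the `r` terms with
`i ∈ A j` grows by at least `f (U ∪ {i}) - f U`.

Submodularity is strong subadditivity, that is, monotonicity of the relative entropy
`D(ρ_ABC ‖ 1 ⊗ ρ_BC)` under the partial trace over `C`. Here `-D(R ‖ T)` is the integral of `log`
against the spectral measure of the relative modular operator `Δ : X ↦ T X R⁻¹` in the vector `√R`,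
and up to an additive constant `log x` is the integral of `-1 / (x + s)` over `s > 0`, so it
suffices to compare the resolvents `⟪√R, (Δ + s)⁻¹ √R⟫`. These are maxima over `X` of
`2 Re Tr R X - Tr T X Xᴴ - s Tr R Xᴴ X`, and this form takes the same value at `X` for the partial
traces of `R` and `T` as at `X ⊗ 1` for `R` and `T` themselves.
-/

section LogSum

open Filter Topology

theorem hasDerivAt_mul_log_add (w : ℝ) {x s : ℝ} (hxs : x + s ≠ 0) :
    HasDerivAt (fun s ↦ w * Real.log (x + s)) (w / (x + s)) s := by
  simpa only [id_eq, mul_one_div] using (((hasDerivAt_id s).const_add x).log hxs).const_mul w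

theorem continuousOn_mul_log_add {w x : ℝ} (hx : 0 ≤ x) (hw : x = 0 → w = 0) :
    ContinuousOn (fun s ↦ w * Real.log (x + s)) (Set.Ici 0) := by
  rcases hx.eq_or_lt with rfl | hx
  · simp only [hw rfl, zero_mul, continuousOn_const]
  · exact continuousOn_const.mul <| (continuousOn_const.add continuousOn_id).log
      fun s (hs : 0 ≤ s) ↦ (add_pos_of_pos_of_nonneg hx hs).ne'

theorem tendsto_sum_mul_log_add_atTop {ι : Type*} [Fintype ι] {w : ι → ℝ} (x : ι → ℝ)
    (hw : ∑ i, w i = 0) :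
    Tendsto (fun s ↦ ∑ i, w i * Real.log (x i + s)) atTop (𝓝 0) := by
  have hlim := tendsto_finsetSum Finset.univ fun i _ ↦
    (Real.tendsto_log_comp_add_sub_log (x i)).const_mul (w i)
  simp only [mul_zero, Finset.sum_const_zero] at hlim
  refine hlim.congr fun s ↦ ?_
  simp only [mul_sub, Finset.sum_sub_distrib, ← Finset.sum_mul, hw, zero_mul, sub_zero, add_comm s]

-- `s ↦ ∑ i, w i * log (x i + s)` is antitone on `[0, ∞)` and tends to `0` at infinity.
theorem sum_mul_log_nonneg_of_sum_div_nonpos {ι : Type*} [Fintype ι] {w x : ι → ℝ}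
    (hx : ∀ i, 0 ≤ x i) (hwx : ∀ i, x i = 0 → w i = 0) (hw : ∑ i, w i = 0)
    (h : ∀ s, 0 < s → ∑ i, w i / (x i + s) ≤ 0) :
    0 ≤ ∑ i, w i * Real.log (x i) := by
  have hderiv : ∀ s, 0 < s →
      HasDerivAt (fun s ↦ ∑ i, w i * Real.log (x i + s)) (∑ i, w i / (x i + s)) s := fun s hs ↦
    HasDerivAt.fun_sum fun i _ ↦
      hasDerivAt_mul_log_add (w i) (add_pos_of_nonneg_of_pos (hx i) hs).ne'
  have hanti : AntitoneOn (fun s ↦ ∑ i, w i * Real.log (x i + s)) (Set.Ici 0) := by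
    refine antitoneOn_of_deriv_nonpos (convex_Ici 0)
      (continuousOn_finsetSum _ fun i _ ↦ continuousOn_mul_log_add (hx i) (hwx i)) ?_ ?_
    all_goals
      rw [interior_Ici]
      intro s hs
    · exact (hderiv s hs).differentiableAt.differentiableWithinAt
    · exact (hderiv s hs).deriv.trans_le (h s hs)
  have hle : ∀ᶠ s in atTop,
      ∑ i, w i * Real.log (x i + s) ≤ ∑ i, w i * Real.log (x i + 0) :=
    (eventually_ge_atTop 0).mono fun s hs ↦ hanti Set.self_mem_Ici hs hs
  simpa only [add_zero] using le_of_tendsto (tendsto_sum_mul_log_add_atTop x hw) hle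

end LogSum

theorem nsmul_sub_empty_le_sum_inter_of_submodular {ι κ M : Type*} [DecidableEq ι] [AddCommGroup M]
    [PartialOrder M] [IsOrderedAddMonoid M] {f : Finset ι → M}
    (hf : ∀ s t, f (s ∪ t) + f (s ∩ t) ≤ f s + f t) (J : Finset κ) (A : κ → Finset ι) {r : ℕ}
    (U : Finset ι) (hA : ∀ i ∈ U, (J.filter (i ∈ A ·)).card = r) :
    r • (f U - f ∅) ≤ ∑ j ∈ J, (f (A j ∩ U) - f ∅) := by
  induction U using Finset.induction_on with
  | empty => simp
  | insert i U hi ih =>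
    have hstep : ∀ j ∈ J, (f (A j ∩ U) - f ∅) + (if i ∈ A j then f (insert i U) - f U else 0) ≤
        f (A j ∩ insert i U) - f ∅ := by
      intro j _
      split_ifs with hij
      · have hunion : A j ∩ insert i U ∪ U = insert i U := by grind
        have hinter : A j ∩ insert i U ∩ U = A j ∩ U := by grind
        have hsub := hf (A j ∩ insert i U) U
        rw [hunion, hinter, ← sub_le_sub_iff_right (f U + f ∅)] at hsub
        convert hsub using 1 <;> abel
      · rw [Finset.inter_insert_of_notMem hij, add_zero]
    calc r • (f (insert i U) - f ∅)
        = r • (f U - f ∅) + r • (f (insert i U) - f U) := by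
          rw [← smul_add, add_comm, sub_add_sub_cancel]
      _ ≤ ∑ j ∈ J, (f (A j ∩ U) - f ∅) +
            ∑ j ∈ J, if i ∈ A j then f (insert i U) - f U else 0 := by
          rw [← Finset.sum_filter, Finset.sum_const, hA i (Finset.mem_insert_self i U)]
          grw [ih fun k hk ↦ hA k (Finset.mem_insert_of_mem hk)]
      _ ≤ ∑ j ∈ J, (f (A j ∩ insert i U) - f ∅) := by
          rw [← Finset.sum_add_distrib]
          exact Finset.sum_le_sum hstep

theorem nsmul_sub_empty_le_sum_of_submodular {ι κ M : Type*} [Fintype ι] [DecidableEq ι]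
    [AddCommGroup M] [PartialOrder M] [IsOrderedAddMonoid M] {f : Finset ι → M}
    (hf : ∀ s t, f (s ∪ t) + f (s ∩ t) ≤ f s + f t) (J : Finset κ) (A : κ → Finset ι) {r : ℕ}
    (hA : ∀ i, (J.filter (i ∈ A ·)).card = r) :
    r • (f Finset.univ - f ∅) ≤ ∑ j ∈ J, (f (A j) - f ∅) := by
  simpa only [Finset.inter_univ] using
    nsmul_sub_empty_le_sum_inter_of_submodular hf J A Finset.univ fun i _ ↦ hA i

open scoped Kronecker

theorem trace_submatrix_equiv {R : Type*} [AddCommMonoid R] {l m : Type*} [Fintype l] [Fintype m]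
    (e : l ≃ m) (A : Matrix m m R) :
    (A.submatrix e e).trace = A.trace :=
  e.sum_comp fun i ↦ A i i

section FunctionalCalculus

variable {l m : Type*} [Fintype l] [DecidableEq l] [Fintype m] [DecidableEq m]

theorem trace_cfc_mul {A : Matrix m m ℂ} (hA : A.IsHermitian) (f : ℝ → ℝ) (B : Matrix m m ℂ) :
    (cfc f A * B).trace = ∑ i, (f (hA.eigenvalues i) : ℂ) *
      (star (hA.eigenvectorUnitary : Matrix m m ℂ) * B * hA.eigenvectorUnitary) i i := by
  rw [hA.cfc_eq, IsHermitian.cfc, Unitary.conjStarAlgAut_apply, Matrix.mul_assoc, Matrix.mul_assoc,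
    trace_mul_comm, Matrix.mul_assoc]
  simp only [trace, diag_apply, diagonal_mul, Function.comp_apply, Complex.coe_algebraMap]

theorem trace_cfc {A : Matrix m m ℂ} (hA : A.IsHermitian) (f : ℝ → ℝ) :
    (cfc f A).trace = ∑ i, (f (hA.eigenvalues i) : ℂ) := by
  simpa using trace_cfc_mul hA f 1

theorem vnEntropy_eq_trace_cfc (M : Matrix m m ℂ) :
    vnEntropy M = (cfc Real.negMulLog M).trace.re := by
  by_cases hM : M.IsHermitian
  · rw [vnEntropy, dif_pos hM, trace_cfc hM, Complex.re_sum, ← Finset.sum_neg_distrib]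
    simp only [Complex.ofReal_re, Real.negMulLog, neg_mul]
  · rw [vnEntropy, dif_neg hM, cfc_apply_of_not_predicate M (show ¬IsSelfAdjoint M from hM),
      trace_zero, Complex.zero_re]

theorem map_cfc_of_isHermitian {F : Type*} [FunLike F (Matrix m m ℂ) (Matrix l l ℂ)]
    [AlgHomClass F ℂ (Matrix m m ℂ) (Matrix l l ℂ)]
    [StarHomClass F (Matrix m m ℂ) (Matrix l l ℂ)] (φ : F) {A : Matrix m m ℂ}
    (hA : A.IsHermitian) (f : ℝ → ℝ) :
    φ (cfc f A) = cfc f (φ A) :=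
  StarAlgHomClass.map_cfc (S := ℂ) φ f A (A.finite_real_spectrum.continuousOn f)
    (LinearMap.continuous_of_finiteDimensional (φ : Matrix m m ℂ →ₗ[ℂ] Matrix l l ℂ)) hA
    (hA.isSelfAdjoint.map φ)

theorem cfc_submatrix_equiv (e : l ≃ m) {A : Matrix m m ℂ} (hA : A.IsHermitian) (f : ℝ → ℝ) :
    cfc f (A.submatrix e e) = (cfc f A).submatrix e e :=
  (map_cfc_of_isHermitian (StarAlgEquiv.ofAlgEquiv (reindexAlgEquiv ℂ ℂ e.symm)
    fun _ ↦ rfl) hA f).symm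

theorem cfc_one_kronecker {A : Matrix m m ℂ} (hA : A.IsHermitian) (f : ℝ → ℝ) :
    cfc f ((1 : Matrix l l ℂ) ⊗ₖ A) = 1 ⊗ₖ cfc f A := by
  let φ : Matrix m m ℂ →ₐ[ℂ] Matrix (l × m) (l × m) ℂ :=
    .ofLinearMap (kroneckerBilinear (R := ℂ) 1) one_kronecker_one fun X Y ↦ by
      change (1 : Matrix l l ℂ) ⊗ₖ (X * Y) = (1 ⊗ₖ X) * (1 ⊗ₖ Y)
      rw [← mul_kronecker_mul, one_mul]
  let ψ : Matrix m m ℂ →⋆ₐ[ℂ] Matrix (l × m) (l × m) ℂ :=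
    { φ with
      map_star' := fun X ↦ by
        change (1 : Matrix l l ℂ) ⊗ₖ Xᴴ = (1 ⊗ₖ X)ᴴ
        rw [conjTranspose_kronecker, conjTranspose_one] }
  exact (map_cfc_of_isHermitian ψ hA f).symm

theorem vnEntropy_submatrix_equiv (e : l ≃ m) {A : Matrix m m ℂ} (hA : A.IsHermitian) :
    vnEntropy (A.submatrix e e) = vnEntropy A := by
  rw [vnEntropy_eq_trace_cfc, vnEntropy_eq_trace_cfc, cfc_submatrix_equiv e hA,
    trace_submatrix_equiv]

theorem vnEntropy_of_unique [Unique m] {M : Matrix m m ℂ} (hM : M.IsHermitian) :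
    vnEntropy M = Real.negMulLog M.trace.re := by
  rw [vnEntropy, dif_pos hM, hM.trace_eq_sum_eigenvalues]
  simp [Real.negMulLog]

end FunctionalCalculus

theorem re_mul_conjTranspose_apply_self {m : Type*} [Fintype m] (Z : Matrix m m ℂ)
    (i : m) :
    ((Z * Zᴴ) i i).re = ∑ k, ‖Z i k‖ ^ 2 := by
  simp only [mul_apply, conjTranspose_apply, Complex.star_def, Complex.mul_conj', Complex.re_sum,
    ← Complex.ofReal_pow, Complex.ofReal_re]

section RelativeEntropy

variable {m : Type*} [Fintype m] [DecidableEq m] {R T : Matrix m m ℂ}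

/-- The quantum relative entropy `D(R‖T) = Tr R (log R - log T)`. As `Real.log 0 = 0`, this is
the usual quantity only when `ker T ≤ ker R`. -/
noncomputable def relEntropy (R T : Matrix m m ℂ) : ℝ :=
  (R * (cfc Real.log R - cfc Real.log T)).trace.re

/-- The overlaps `⟪u i, v k⟫` of the eigenvectors `u i` of `R` and `v k` of `T`. -/
noncomputable def overlap (hR : R.IsHermitian) (hT : T.IsHermitian) : Matrix m m ℂ :=
  star (hR.eigenvectorUnitary : Matrix m m ℂ) * hT.eigenvectorUnitary

/-- The eigenvalues `q k / p i` of the relative modular operator `X ↦ T X R⁻¹`, where `p` and `q`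
are the eigenvalues of `R` and `T`; the value is `0` where `p i = 0`. -/
noncomputable def modularRatio (hR : R.IsHermitian) (hT : T.IsHermitian) (a : m × m) : ℝ :=
  hT.eigenvalues a.2 / hR.eigenvalues a.1

/-- The spectral measure of the relative modular operator `X ↦ T X R⁻¹` in the vector `√R`. -/
noncomputable def modularWeight (hR : R.IsHermitian) (hT : T.IsHermitian) (a : m × m) : ℝ :=
  hR.eigenvalues a.1 * ‖overlap hR hT a.1 a.2‖ ^ 2

theorem modularRatio_nonneg (hR : R.PosSemidef) (hT : T.PosSemidef) (a : m × m) :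
    0 ≤ modularRatio hR.1 hT.1 a :=
  div_nonneg (hT.eigenvalues_nonneg _) (hR.eigenvalues_nonneg _)

theorem trace_cfc_mul_cfc (hR : R.IsHermitian) (hT : T.IsHermitian) (f g : ℝ → ℝ) :
    (cfc f R * cfc g T).trace.re = ∑ a : m × m,
      f (hR.eigenvalues a.1) * g (hT.eigenvalues a.2) * ‖overlap hR hT a.1 a.2‖ ^ 2 := by
  have hconj : star (hR.eigenvectorUnitary : Matrix m m ℂ) * cfc g T * hR.eigenvectorUnitary =
      overlap hR hT * (diagonal (fun k ↦ (g (hT.eigenvalues k) : ℂ)) * (overlap hR hT)ᴴ) := by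
    rw [hT.cfc_eq, IsHermitian.cfc, Unitary.conjStarAlgAut_apply, ← star_eq_conjTranspose, overlap,
      star_mul, star_star]
    simp only [Matrix.mul_assoc]
    rfl
  rw [trace_cfc_mul hR, hconj, Complex.re_sum, Fintype.sum_prod_type]
  refine Finset.sum_congr rfl fun i _ ↦ ?_
  rw [Complex.re_ofReal_mul, mul_apply, Complex.re_sum, Finset.mul_sum]
  refine Finset.sum_congr rfl fun k _ ↦ ?_
  rw [diagonal_mul, conjTranspose_apply, mul_left_comm, Complex.star_def, Complex.mul_conj',
    ← Complex.ofReal_pow, Complex.re_ofReal_mul, Complex.ofReal_re, mul_assoc]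

theorem sum_modularWeight (hR : R.IsHermitian) (hT : T.IsHermitian) :
    ∑ a, modularWeight hR hT a = R.trace.re := by
  have h := trace_cfc_mul_cfc hR hT id 1
  rw [cfc_id ℝ R hR.isSelfAdjoint, cfc_one ℝ T hT.isSelfAdjoint, mul_one] at h
  simpa only [id_eq, Pi.one_apply, mul_one] using! h.symm

theorem modularWeight_eq_zero_of_modularRatio_eq_zero (hR : R.IsHermitian) (hT : T.IsHermitian)
    (hker : ∀ v, T *ᵥ v = 0 → R *ᵥ v = 0) {a : m × m} (ha : modularRatio hR hT a = 0) :
    modularWeight hR hT a = 0 := by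
  rcases div_eq_zero_iff.mp ha with hq | hp
  · have hRv : R *ᵥ hT.eigenvectorBasis a.2 = 0 :=
      hker _ <| by rw [hT.mulVec_eigenvectorBasis, hq, zero_smul]
    have hoverlap : (hR.eigenvalues a.1 : ℂ) * overlap hR hT a.1 a.2 = 0 := calc
      _ = star (R *ᵥ hR.eigenvectorBasis a.1) ⬝ᵥ hT.eigenvectorBasis a.2 := by
        rw [hR.mulVec_eigenvectorBasis, star_smul, smul_dotProduct, star_trivial, Complex.real_smul]
        rfl
      _ = 0 := by
        rw [star_mulVec, hR.eq, ← dotProduct_mulVec, hRv, dotProduct_zero]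
    rcases mul_eq_zero.mp hoverlap with h | h
    · rw [modularWeight, Complex.ofReal_eq_zero.mp h, zero_mul]
    · rw [modularWeight, h, norm_zero, zero_pow two_ne_zero, mul_zero]
  · rw [modularWeight, hp, zero_mul]

theorem sum_modularWeight_mul_log_modularRatio (hR : R.IsHermitian) (hT : T.IsHermitian)
    (hker : ∀ v, T *ᵥ v = 0 → R *ᵥ v = 0) :
    ∑ a, modularWeight hR hT a * Real.log (modularRatio hR hT a) = -relEntropy R T := by
  have hRR := trace_cfc_mul_cfc hR hT (fun x ↦ id x * Real.log x) 1
  rw [cfc_mul id Real.log R (R.finite_real_spectrum.continuousOn _)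
    (R.finite_real_spectrum.continuousOn _), cfc_id ℝ R hR.isSelfAdjoint,
    cfc_one ℝ T hT.isSelfAdjoint, mul_one] at hRR
  have hRT := trace_cfc_mul_cfc hR hT id Real.log
  rw [cfc_id ℝ R hR.isSelfAdjoint] at hRT
  rw [relEntropy, mul_sub, trace_sub, Complex.sub_re, hRR, hRT, neg_sub, ← Finset.sum_sub_distrib]
  refine Finset.sum_congr rfl fun a _ ↦ ?_
  by_cases ha : modularRatio hR hT a = 0
  · have hw := modularWeight_eq_zero_of_modularRatio_eq_zero hR hT hker ha
    rw [hw, zero_mul, id_eq, Pi.one_apply]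
    rw [modularWeight] at hw
    linear_combination (Real.log (hR.eigenvalues a.1) - Real.log (hT.eigenvalues a.2)) * hw
  · obtain ⟨hq, hp⟩ := div_ne_zero_iff.mp ha
    rw [modularRatio, Real.log_div hq hp, modularWeight, id_eq, Pi.one_apply]
    ring

/-- The quadratic form whose maximum over `X` is the resolvent at `-s` of the relative modular
operator `X ↦ T X R⁻¹`, evaluated at the vector `√R`. -/
noncomputable def resolventForm (s : ℝ) (R T X : Matrix m m ℂ) : ℝ :=
  2 * (R * X).trace.re - (T * (X * Xᴴ)).trace.re - s * (R * (Xᴴ * X)).trace.re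

theorem re_trace_mul (hR : R.IsHermitian) (B : Matrix m m ℂ) :
    (R * B).trace.re = ∑ i, hR.eigenvalues i *
      ((star (hR.eigenvectorUnitary : Matrix m m ℂ) * B * hR.eigenvectorUnitary) i i).re := by
  have h := trace_cfc_mul hR id B
  rw [cfc_id ℝ R hR.isSelfAdjoint] at h
  rw [h, Complex.re_sum]
  simp only [id_eq, Complex.re_ofReal_mul]

theorem resolventForm_eq_sum (hR : R.IsHermitian) (hT : T.IsHermitian) (s : ℝ)
    {X Y : Matrix m m ℂ}
    (hX : X = hT.eigenvectorUnitary * Y * star (hR.eigenvectorUnitary : Matrix m m ℂ)) :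
    resolventForm s R T X = ∑ a : m × m,
      (2 * hR.eigenvalues a.1 * (overlap hR hT a.1 a.2 * Y a.2 a.1).re -
        (hT.eigenvalues a.2 + s * hR.eigenvalues a.1) * ‖Y a.2 a.1‖ ^ 2) := by
  have hU (Z : Matrix m m ℂ) :
      star (hR.eigenvectorUnitary : Matrix m m ℂ) * (hR.eigenvectorUnitary * Z) = Z := by
    rw [← mul_assoc, Unitary.coe_star_mul_self, one_mul]
  have hV (Z : Matrix m m ℂ) :
      star (hT.eigenvectorUnitary : Matrix m m ℂ) * (hT.eigenvectorUnitary * Z) = Z := by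
    rw [← mul_assoc, Unitary.coe_star_mul_self, one_mul]
  have hRX : star (hR.eigenvectorUnitary : Matrix m m ℂ) * X * hR.eigenvectorUnitary =
      overlap hR hT * Y := by
    simp only [hX, overlap, mul_assoc, Unitary.coe_star_mul_self, mul_one]
  have hTXX : star (hT.eigenvectorUnitary : Matrix m m ℂ) * (X * star X) * hT.eigenvectorUnitary =
      Y * star Y := by
    simp only [hX, star_mul, star_star, mul_assoc, hU, hV, Unitary.coe_star_mul_self, mul_one]
  have hRXX : star (hR.eigenvectorUnitary : Matrix m m ℂ) * (star X * X) * hR.eigenvectorUnitary =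
      star Y * star (star Y) := by
    simp only [hX, star_mul, star_star, mul_assoc, hU, hV, Unitary.coe_star_mul_self, mul_one]
  rw [resolventForm, ← star_eq_conjTranspose, re_trace_mul hR, re_trace_mul hT, re_trace_mul hR,
    hRX, hTXX, hRXX]
  simp only [star_eq_conjTranspose, re_mul_conjTranspose_apply_self, conjTranspose_apply, norm_star]
  rw [Fintype.sum_prod_type]
  simp only [Finset.sum_sub_distrib, add_mul, Finset.sum_add_distrib, mul_apply, Complex.re_sum,
    Finset.mul_sum, mul_assoc]
  rw [Finset.sum_comm (f := fun i k ↦ hT.eigenvalues k * ‖Y k i‖ ^ 2), sub_sub]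

theorem two_mul_re_sub_eq {p q s : ℝ} (hp : 0 ≤ p) (hq : 0 ≤ q) (hs : 0 < s) (z w : ℂ) :
    2 * p * (z * w).re - (q + s * p) * ‖w‖ ^ 2 =
      p * ‖z‖ ^ 2 / (q / p + s) - (q + s * p) * ‖w - (p / (q + s * p) : ℝ) * star z‖ ^ 2 := by
  rcases hp.eq_or_lt with rfl | hp
  · simp
  · have hdiv : p * ‖z‖ ^ 2 / (q / p + s) = p ^ 2 * ‖z‖ ^ 2 / (q + s * p) := by field_simp
    rw [hdiv, Complex.sq_norm, Complex.sq_norm, Complex.sq_norm, Complex.normSq_sub, map_mul,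
      Complex.star_def, Complex.normSq_conj, Complex.normSq_ofReal, map_mul, Complex.conj_conj,
      Complex.conj_ofReal, mul_left_comm w, Complex.re_ofReal_mul, mul_comm w]
    field_simp
    ring

theorem isGreatest_resolventForm (hR : R.PosSemidef) (hT : T.PosSemidef) {s : ℝ} (hs : 0 < s) :
    IsGreatest (Set.range (resolventForm s R T))
      (∑ a, modularWeight hR.1 hT.1 a / (modularRatio hR.1 hT.1 a + s)) := by
  set U := hR.1.eigenvectorUnitary
  set V := hT.1.eigenvectorUnitary
  set p := hR.1.eigenvalues
  set q := hT.1.eigenvalues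
  let Ymax : Matrix m m ℂ := of fun k i ↦
    (p i / (q k + s * p i) : ℝ) * star (overlap hR.1 hT.1 i k)
  have hform {X Y : Matrix m m ℂ} (hX : X = V * Y * star (U : Matrix m m ℂ)) :
      resolventForm s R T X =
        ∑ a, modularWeight hR.1 hT.1 a / (modularRatio hR.1 hT.1 a + s) -
        ∑ a : m × m, (q a.2 + s * p a.1) * ‖(Y - Ymax) a.2 a.1‖ ^ 2 := by
    rw [resolventForm_eq_sum hR.1 hT.1 s hX, ← Finset.sum_sub_distrib]
    exact Finset.sum_congr rfl fun a _ ↦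
      two_mul_re_sub_eq (hR.eigenvalues_nonneg _) (hT.eigenvalues_nonneg _) hs _ _
  constructor
  · refine ⟨V * Ymax * star (U : Matrix m m ℂ), ?_⟩
    rw [hform rfl, sub_self]
    simp
  · rintro _ ⟨X, rfl⟩
    have hX : X = V * (star (V : Matrix m m ℂ) * X * U) * star (U : Matrix m m ℂ) := by
      have hUU : (U : Matrix m m ℂ) * star (U : Matrix m m ℂ) = 1 := Unitary.coe_mul_star_self U
      have hVV : (V : Matrix m m ℂ) * star (V : Matrix m m ℂ) = 1 := Unitary.coe_mul_star_self V
      rw [mul_assoc _ X, mul_assoc, mul_assoc, mul_assoc, hUU, mul_one, ← mul_assoc, hVV, one_mul]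
    rw [hform hX, sub_le_self_iff]
    exact Finset.sum_nonneg fun a _ ↦ mul_nonneg (add_nonneg (hT.eigenvalues_nonneg _)
      (mul_nonneg hs.le (hR.eigenvalues_nonneg _))) (sq_nonneg _)

end RelativeEntropy

section PartialTrace

variable {α β : Type*}

/-- The partial trace over the right tensor factor. -/
def traceRight {R : Type*} [AddCommMonoid R] [Fintype β] (M : Matrix (α × β) (α × β) R) :
    Matrix α α R :=
  of fun x y ↦ ∑ b, M (x, b) (y, b)

/-- The partial trace over the left tensor factor. -/
def traceLeft {R : Type*} [AddCommMonoid R] [Fintype α] (M : Matrix (α × β) (α × β) R) :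
    Matrix β β R :=
  of fun x y ↦ ∑ a, M (a, x) (a, y)

theorem traceRight_eq_sum_submatrix {R : Type*} [AddCommMonoid R] [Fintype β]
    (M : Matrix (α × β) (α × β) R) : traceRight M = ∑ b, M.submatrix (·, b) (·, b) := by
  ext x y
  simp only [traceRight, of_apply, Matrix.sum_apply, submatrix_apply]

theorem traceLeft_eq_traceRight_submatrix {R : Type*} [AddCommMonoid R] [Fintype α]
    (M : Matrix (α × β) (α × β) R) :
    traceLeft M = traceRight (M.submatrix Prod.swap Prod.swap) :=
  rfl

theorem traceRight_of_unique {R : Type*} [AddCommMonoid R] [Unique β] [Fintype β]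
    (M : Matrix (α × β) (α × β) R) :
    traceRight M = M.submatrix (Equiv.prodUnique α β).symm (Equiv.prodUnique α β).symm := by
  ext x y
  exact Fintype.sum_unique _

theorem posSemidef_traceRight {R : Type*} [Ring R] [PartialOrder R] [AddLeftMono R]
    [StarRing R] [Fintype β] {M : Matrix (α × β) (α × β) R} (hM : M.PosSemidef) :
    (traceRight M).PosSemidef := by
  rw [traceRight_eq_sum_submatrix]
  exact posSemidef_sum _ fun b _ ↦ hM.submatrix _

theorem posSemidef_traceLeft {R : Type*} [Ring R] [PartialOrder R] [AddLeftMono R]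
    [StarRing R] [Fintype α] {M : Matrix (α × β) (α × β) R} (hM : M.PosSemidef) :
    (traceLeft M).PosSemidef := by
  rw [traceLeft_eq_traceRight_submatrix]
  exact posSemidef_traceRight (hM.submatrix _)

/-- The elementary tensor `v ⊗ e_b`, where `e_b` is a standard basis vector. -/
def tensorSingle {R : Type*} [Zero R] [DecidableEq β] (v : α → R) (b : β) : α × β → R :=
  fun x ↦ Pi.single (M := fun _ ↦ R) b (v x.1) x.2

theorem sum_tensorSingle {R : Type*} [AddCommMonoid R] [Fintype β] [DecidableEq β]
    (u : α × β → R) : ∑ b, tensorSingle (fun a ↦ u (a, b)) b = u := by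
  funext x
  simp [tensorSingle, Pi.single_apply]

variable [Fintype α] [Fintype β]

theorem trace_traceRight {R : Type*} [AddCommMonoid R] (M : Matrix (α × β) (α × β) R) :
    (traceRight M).trace = M.trace :=
  (Fintype.sum_prod_type fun x ↦ M x x).symm

theorem trace_mul_kronecker_one {R : Type*} [Semiring R] [DecidableEq β]
    (M : Matrix (α × β) (α × β) R) (X : Matrix α α R) :
    (M * (X ⊗ₖ 1)).trace = (traceRight M * X).trace := by
  simp only [trace, diag_apply, mul_apply, traceRight, of_apply, Fintype.sum_prod_type,
    kroneckerMap_apply, one_apply, mul_ite, mul_one, mul_zero, Finset.sum_ite_eq',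
    Finset.mem_univ, if_true, Finset.sum_mul]
  exact Finset.sum_congr rfl fun _ _ ↦ Finset.sum_comm

theorem trace_mul_one_kronecker {R : Type*} [Semiring R] [DecidableEq α]
    (M : Matrix (α × β) (α × β) R) (X : Matrix β β R) :
    (M * (1 ⊗ₖ X)).trace = (traceLeft M * X).trace := by
  simp only [trace, diag_apply, mul_apply, traceLeft, of_apply, Fintype.sum_prod_type,
    kroneckerMap_apply, one_apply, ite_mul, one_mul, zero_mul, mul_ite, mul_zero,
    Finset.sum_ite_irrel, Finset.sum_const_zero, Finset.sum_ite_eq', Finset.mem_univ, if_true,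
    Finset.sum_mul]
  rw [Finset.sum_comm]
  exact Finset.sum_congr rfl fun _ _ ↦ Finset.sum_comm

theorem one_kronecker_mulVec_apply {R : Type*} [Semiring R] [DecidableEq α] (N : Matrix β β R)
    (v : α × β → R) (x : α × β) :
    (((1 : Matrix α α R) ⊗ₖ N) *ᵥ v) x = (N *ᵥ fun b ↦ v (x.1, b)) x.2 := by
  simp [mulVec, dotProduct, Fintype.sum_prod_type, one_apply, Finset.sum_ite_irrel]

theorem resolventForm_kronecker_one [DecidableEq β] (s : ℝ) (M N : Matrix (α × β) (α × β) ℂ)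
    (X : Matrix α α ℂ) :
    resolventForm s M N (X ⊗ₖ 1) = resolventForm s (traceRight M) (traceRight N) X := by
  have hX : (X ⊗ₖ (1 : Matrix β β ℂ))ᴴ = Xᴴ ⊗ₖ 1 := by
    rw [conjTranspose_kronecker, conjTranspose_one]
  simp only [resolventForm, hX, ← mul_kronecker_mul, one_mul, trace_mul_kronecker_one]

theorem dotProduct_tensorSingle {R : Type*} [NonUnitalNonAssocSemiring R] [DecidableEq β]
    (u : α × β → R) (v : α → R) (b : β) :
    u ⬝ᵥ tensorSingle v b = (fun x ↦ u (x, b)) ⬝ᵥ v := by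
  simp [dotProduct, tensorSingle, Fintype.sum_prod_type, Pi.single_apply]

theorem star_tensorSingle_dotProduct {R : Type*} [NonUnitalCommSemiring R] [StarRing R]
    [DecidableEq β] (v : α → R) (b : β) (u : α × β → R) :
    star (tensorSingle v b) ⬝ᵥ u = star v ⬝ᵥ fun x ↦ u (x, b) := by
  have hstar : star (tensorSingle v b) = tensorSingle (star v) b := by
    funext x
    exact Pi.apply_single (fun _ ↦ star) (fun _ ↦ star_zero R) b (v x.1) x.2
  rw [hstar, dotProduct_comm, dotProduct_tensorSingle, dotProduct_comm]

theorem traceRight_mulVec {R : Type*} [NonUnitalNonAssocSemiring R] [DecidableEq β]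
    (M : Matrix (α × β) (α × β) R) (v : α → R) :
    traceRight M *ᵥ v = ∑ b, fun x ↦ (M *ᵥ tensorSingle v b) (x, b) := by
  funext x
  simp only [mulVec, dotProduct_tensorSingle, Finset.sum_apply]
  simp only [dotProduct, traceRight, of_apply, Finset.sum_mul]
  exact Finset.sum_comm

theorem mulVec_tensorSingle_eq_zero {𝕜 : Type*} [RCLike 𝕜] [DecidableEq β]
    {M : Matrix (α × β) (α × β) 𝕜} (hM : M.PosSemidef) {v : α → 𝕜} (hv : traceRight M *ᵥ v = 0)
    (b : β) :
    M *ᵥ tensorSingle v b = 0 := by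
  have hsum : ∑ b, star (tensorSingle v b) ⬝ᵥ M *ᵥ tensorSingle v b = 0 := by
    simp only [star_tensorSingle_dotProduct, ← dotProduct_sum, ← traceRight_mulVec, hv,
      dotProduct_zero]
  rw [Finset.sum_eq_zero_iff_of_nonneg fun b _ ↦ hM.dotProduct_mulVec_nonneg _] at hsum
  exact (hM.dotProduct_mulVec_zero_iff _).mp (hsum b (Finset.mem_univ b))

theorem traceRight_mulVec_eq_zero {𝕜 : Type*} [RCLike 𝕜] {M N : Matrix (α × β) (α × β) 𝕜}
    (hN : N.PosSemidef) (hker : ∀ v, N *ᵥ v = 0 → M *ᵥ v = 0) {v : α → 𝕜}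
    (hv : traceRight N *ᵥ v = 0) :
    traceRight M *ᵥ v = 0 := by
  classical
  rw [traceRight_mulVec]
  refine Finset.sum_eq_zero fun b _ ↦ ?_
  rw [hker _ (mulVec_tensorSingle_eq_zero hN hv b)]
  rfl

theorem mulVec_eq_zero_of_one_kronecker_traceLeft_mulVec_eq_zero {𝕜 : Type*} [RCLike 𝕜]
    [DecidableEq α] {M : Matrix (α × β) (α × β) 𝕜} (hM : M.PosSemidef) {v : α × β → 𝕜}
    (hv : ((1 : Matrix α α 𝕜) ⊗ₖ traceLeft M) *ᵥ v = 0) : M *ᵥ v = 0 := by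
  have hslice (a : α) :
      M.submatrix Prod.swap Prod.swap *ᵥ tensorSingle (fun b ↦ v (a, b)) a = 0 := by
    refine mulVec_tensorSingle_eq_zero (hM.submatrix _) (funext fun b ↦ ?_) a
    rw [← traceLeft_eq_traceRight_submatrix, ← one_kronecker_mulVec_apply _ v (a, b), hv]
    rfl
  have hswap : M.submatrix Prod.swap Prod.swap *ᵥ (v ∘ Prod.swap) = 0 := by
    rw [← sum_tensorSingle (v ∘ Prod.swap), mulVec_sum]
    exact Finset.sum_eq_zero fun a _ ↦ hslice a
  rw [← Equiv.coe_prodComm, submatrix_mulVec_equiv] at hswap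
  funext x
  exact congrFun hswap x.swap

variable [DecidableEq α] [DecidableEq β]

theorem relEntropy_traceRight_le {M N : Matrix (α × β) (α × β) ℂ} (hM : M.PosSemidef)
    (hN : N.PosSemidef) (hker : ∀ v, N *ᵥ v = 0 → M *ᵥ v = 0) :
    relEntropy (traceRight M) (traceRight N) ≤ relEntropy M N := by
  have hM' := posSemidef_traceRight hM
  have hN' := posSemidef_traceRight hN
  have hker' : ∀ v, traceRight N *ᵥ v = 0 → traceRight M *ᵥ v = 0 := fun _ ↦
    traceRight_mulVec_eq_zero hN hker
  have hlog := sum_mul_log_nonneg_of_sum_div_nonpos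
    (w := Sum.elim (modularWeight hM'.1 hN'.1) (-modularWeight hM.1 hN.1))
    (x := Sum.elim (modularRatio hM'.1 hN'.1) (modularRatio hM.1 hN.1)) ?_ ?_ ?_ ?_
  · simp only [Fintype.sum_sum_type, Sum.elim_inl, Sum.elim_inr, Pi.neg_apply, neg_mul,
      Finset.sum_neg_distrib, sum_modularWeight_mul_log_modularRatio _ _ hker,
      sum_modularWeight_mul_log_modularRatio _ _ hker'] at hlog
    linarith
  · rintro (a | a)
    exacts [modularRatio_nonneg hM' hN' a, modularRatio_nonneg hM hN a]
  · rintro (a | a) ha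
    · exact modularWeight_eq_zero_of_modularRatio_eq_zero _ _ hker' ha
    · exact neg_eq_zero.mpr (modularWeight_eq_zero_of_modularRatio_eq_zero _ _ hker ha)
  · simp only [Fintype.sum_sum_type, Sum.elim_inl, Sum.elim_inr, Pi.neg_apply,
      Finset.sum_neg_distrib, sum_modularWeight, trace_traceRight, add_neg_cancel]
  · intro s hs
    simp only [Fintype.sum_sum_type, Sum.elim_inl, Sum.elim_inr, Pi.neg_apply, neg_div,
      Finset.sum_neg_distrib, ← sub_eq_add_neg, sub_nonpos]
    obtain ⟨X, hX⟩ := (isGreatest_resolventForm hM' hN' hs).1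
    rw [← hX, ← resolventForm_kronecker_one]
    exact (isGreatest_resolventForm hM hN hs).2 ⟨_, rfl⟩

end PartialTrace

section StrongSubadditivity

variable {α β γ : Type*}

theorem traceRight_submatrix_prodAssoc_kronecker {R : Type*} [NonUnitalNonAssocSemiring R]
    [Fintype γ] (X : Matrix α α R) (N : Matrix (β × γ) (β × γ) R) :
    traceRight ((X ⊗ₖ N).submatrix (Equiv.prodAssoc α β γ) (Equiv.prodAssoc α β γ)) =
      X ⊗ₖ traceRight N := by
  ext x y
  exact (Finset.mul_sum _ _ (X x.1 y.1)).symm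

theorem traceLeft_traceRight_submatrix_prodAssoc {R : Type*} [AddCommMonoid R] [Fintype α]
    [Fintype γ] (M : Matrix (α × β × γ) (α × β × γ) R) :
    traceLeft (traceRight (M.submatrix (Equiv.prodAssoc α β γ) (Equiv.prodAssoc α β γ))) =
      traceRight (traceLeft M) := by
  ext x y
  exact Finset.sum_comm

variable [Fintype α] [DecidableEq α] [Fintype β] [DecidableEq β]

theorem re_trace_mul_cfc_log {R : Matrix α α ℂ} (hR : R.IsHermitian) :
    (R * cfc Real.log R).trace.re = -vnEntropy R := by
  have hcfc := cfc_mul id Real.log R (R.finite_real_spectrum.continuousOn _)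
    (R.finite_real_spectrum.continuousOn _)
  rw [cfc_id ℝ R hR.isSelfAdjoint] at hcfc
  rw [vnEntropy_eq_trace_cfc, Real.negMulLog_eq_neg, cfc_neg, ← Complex.neg_re, ← trace_neg,
    neg_neg, ← hcfc]
  rfl

theorem relEntropy_one_kronecker_traceLeft {M : Matrix (α × β) (α × β) ℂ} (hM : M.IsHermitian)
    (hM' : (traceLeft M).IsHermitian) :
    relEntropy M (1 ⊗ₖ traceLeft M) = vnEntropy (traceLeft M) - vnEntropy M := by
  rw [relEntropy, cfc_one_kronecker hM', mul_sub, trace_sub, Complex.sub_re,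
    re_trace_mul_cfc_log hM, trace_mul_one_kronecker, re_trace_mul_cfc_log hM']
  ring

theorem relEntropy_submatrix_equiv (e : α ≃ β) {R T : Matrix β β ℂ} (hR : R.IsHermitian)
    (hT : T.IsHermitian) :
    relEntropy (R.submatrix e e) (T.submatrix e e) = relEntropy R T := by
  rw [relEntropy, relEntropy, cfc_submatrix_equiv e hR, cfc_submatrix_equiv e hT, ← Pi.sub_apply,
    ← Pi.sub_apply, ← submatrix_sub, submatrix_mul_equiv, trace_submatrix_equiv]

variable [Fintype γ] [DecidableEq γ]

theorem vnEntropy_strong_subadditivity {M : Matrix (α × β × γ) (α × β × γ) ℂ}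
    (hM : M.PosSemidef) :
    vnEntropy M + vnEntropy (traceRight (traceLeft M)) ≤
      vnEntropy (traceRight (M.submatrix (Equiv.prodAssoc α β γ) (Equiv.prodAssoc α β γ))) +
        vnEntropy (traceLeft M) := by
  set e := Equiv.prodAssoc α β γ
  have hMβγ := posSemidef_traceLeft hM
  have hMαβ := posSemidef_traceRight (hM.submatrix e)
  have hN : ((1 : Matrix α α ℂ) ⊗ₖ traceLeft M).PosSemidef := PosSemidef.one.kronecker hMβγ
  have hker (v : (α × β) × γ → ℂ)
      (hv : ((1 : Matrix α α ℂ) ⊗ₖ traceLeft M).submatrix e e *ᵥ v = 0) :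
      M.submatrix e e *ᵥ v = 0 := by
    rw [submatrix_mulVec_equiv, e.surjective.injective_comp_right.eq_iff' (Pi.zero_comp e)] at hv ⊢
    exact mulVec_eq_zero_of_one_kronecker_traceLeft_mulVec_eq_zero hM hv
  have hmono := relEntropy_traceRight_le (hM.submatrix e) (hN.submatrix e) hker
  rw [relEntropy_submatrix_equiv e hM.1 hN.1, relEntropy_one_kronecker_traceLeft hM.1 hMβγ.1,
    traceRight_submatrix_prodAssoc_kronecker, ← traceLeft_traceRight_submatrix_prodAssoc,
    relEntropy_one_kronecker_traceLeft hMαβ.1 (posSemidef_traceLeft hMαβ).1] at hmono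
  linarith [congrArg vnEntropy (traceLeft_traceRight_submatrix_prodAssoc M)]

end StrongSubadditivity

section Marginal

variable {ι : Type*} {d : ι → Type*} {R : Type*} [AddCommMonoid R]

/-- Splits a configuration on the sites satisfying `r` into its restrictions to the sites
satisfying `p` and `q`, when `r` is the disjoint union of `p` and `q`. -/
def piSplit (d : ι → Type*) {p q r : ι → Prop} [DecidablePred p] (hr : ∀ i, r i ↔ p i ∨ q i)
    (hpq : ∀ i, p i → ¬q i) :
    (∀ i : {i // r i}, d i) ≃ (∀ i : {i // p i}, d i) × (∀ i : {i // q i}, d i) where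
  toFun w := (fun i ↦ w ⟨i, (hr i).mpr (.inl i.2)⟩, fun i ↦ w ⟨i, (hr i).mpr (.inr i.2)⟩)
  invFun v i := if h : p i then v.1 ⟨i, h⟩ else v.2 ⟨i, ((hr i).mp i.2).resolve_left h⟩
  left_inv w := by grind
  right_inv v := by ext i <;> grind

variable [Fintype ι] [DecidableEq ι] [∀ i, Fintype (d i)]

/-- The reduced matrix of `ρ` on the sites in `F`, where site `i` has the computational basis
`d i`. -/
def marginal (F : Finset ι) (ρ : Matrix (∀ i, d i) (∀ i, d i) R) :
    Matrix (∀ i : {i // i ∈ F}, d i) (∀ i : {i // i ∈ F}, d i) R :=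
  traceRight (ρ.submatrix (Equiv.piEquivPiSubtypeProd (· ∈ F) d).symm
    (Equiv.piEquivPiSubtypeProd (· ∈ F) d).symm)

theorem reducedMat_eq_marginal {n : ℕ} (F : Finset (Fin n))
    (ρ : Matrix (Fin n → Fin 2) (Fin n → Fin 2) ℂ) :
    reducedMat F ρ = marginal F ρ :=
  rfl

theorem posSemidef_marginal {R : Type*} [Ring R] [PartialOrder R] [AddLeftMono R]
    [StarRing R] {ρ : Matrix (∀ i, d i) (∀ i, d i) R} (hρ : ρ.PosSemidef) (F : Finset ι) :
    (marginal F ρ).PosSemidef :=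
  posSemidef_traceRight (hρ.submatrix _)

theorem trace_marginal (F : Finset ι) (ρ : Matrix (∀ i, d i) (∀ i, d i) R) :
    (marginal F ρ).trace = ρ.trace := by
  rw [marginal, trace_traceRight, trace_submatrix_equiv]

theorem traceRight_marginal {F G H : Finset ι} (hH : ∀ i, i ∈ H ↔ i ∈ F ∨ i ∈ G)
    (hFG : ∀ i, i ∈ F → i ∉ G) (ρ : Matrix (∀ i, d i) (∀ i, d i) R) :
    traceRight ((marginal H ρ).submatrix (piSplit d hH hFG).symm (piSplit d hH hFG).symm) =
      marginal F ρ := by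
  have hcompl (i : ι) : i ∉ F ↔ i ∈ G ∨ i ∉ H := by grind
  have hGH (i : ι) (hi : i ∈ G) : ¬i ∉ H := by grind
  have hassoc : ((Equiv.piEquivPiSubtypeProd (· ∈ H) d).trans
      ((piSplit d hH hFG).prodCongr (.refl _))).trans (Equiv.prodAssoc _ _ _) =
      (Equiv.piEquivPiSubtypeProd (· ∈ F) d).trans
        ((Equiv.refl _).prodCongr (piSplit d hcompl hGH)) :=
    Equiv.ext fun _ ↦ rfl
  have hglue (x : ∀ i : {i // i ∈ F}, d i) (y : ∀ i : {i // i ∈ G}, d i)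
      (z : ∀ i : {i // i ∉ H}, d i) :=
    DFunLike.congr_fun (congrArg Equiv.symm hassoc) (x, y, z)
  ext x x'
  simp only [traceRight, marginal, of_apply, submatrix_apply]
  rw [← Fintype.sum_prod_type']
  exact Fintype.sum_equiv (piSplit d hcompl hGH).symm _ _ fun v ↦
    congrArg₂ ρ (hglue x v.1 v.2) (hglue x' v.1 v.2)

theorem traceLeft_marginal {F G H : Finset ι} (hH : ∀ i, i ∈ H ↔ i ∈ F ∨ i ∈ G)
    (hFG : ∀ i, i ∈ F → i ∉ G) (ρ : Matrix (∀ i, d i) (∀ i, d i) R) :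
    traceLeft ((marginal H ρ).submatrix (piSplit d hH hFG).symm (piSplit d hH hFG).symm) =
      marginal G ρ := by
  have hH' (i : ι) : i ∈ H ↔ i ∈ G ∨ i ∈ F := (hH i).trans or_comm
  have hGF (i : ι) (hi : i ∈ G) : i ∉ F := fun h ↦ hFG i h hi
  have hswap : (piSplit d hH hFG).trans (Equiv.prodComm _ _) = piSplit d hH' hGF :=
    Equiv.ext fun _ ↦ rfl
  rw [← traceRight_marginal hH' hGF, ← hswap]
  rfl

variable [∀ i, DecidableEq (d i)] {ρ : Matrix (∀ i, d i) (∀ i, d i) ℂ}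

theorem vnEntropy_marginal_univ (hρ : ρ.IsHermitian) :
    vnEntropy (marginal Finset.univ ρ) = vnEntropy ρ := by
  have : IsEmpty {i : ι // i ∉ Finset.univ} := ⟨fun i ↦ i.2 (Finset.mem_univ _)⟩
  rw [marginal, traceRight_of_unique, vnEntropy_submatrix_equiv _ (hρ.submatrix _),
    vnEntropy_submatrix_equiv _ hρ]

theorem vnEntropy_marginal_empty (hρ : ρ.PosSemidef) :
    vnEntropy (marginal ∅ ρ) = Real.negMulLog ρ.trace.re := by
  have : IsEmpty {i : ι // i ∈ (∅ : Finset ι)} := ⟨fun i ↦ Finset.notMem_empty _ i.2⟩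
  rw [vnEntropy_of_unique (posSemidef_marginal hρ ∅).1, trace_marginal]

theorem vnEntropy_marginal_union_add_inter_le (hρ : ρ.PosSemidef) (s t : Finset ι) :
    vnEntropy (marginal (s ∪ t) ρ) + vnEntropy (marginal (s ∩ t) ρ) ≤
      vnEntropy (marginal s ρ) + vnEntropy (marginal t ρ) := by
  -- Strong subadditivity for the tripartition of `s ∪ t` into `s \ t`, `s ∩ t` and `t \ s`.
  let eUnionLeft := piSplit d (p := (· ∈ s \ t)) (q := (· ∈ t)) (r := (· ∈ s ∪ t))
    (by grind) (by grind)
  let eRight := piSplit d (p := (· ∈ s ∩ t)) (q := (· ∈ t \ s)) (r := (· ∈ t))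
    (by grind) (by grind)
  let eUnionRight := piSplit d (p := (· ∈ s)) (q := (· ∈ t \ s)) (r := (· ∈ s ∪ t))
    (by grind) (by grind)
  let eLeft := piSplit d (p := (· ∈ s \ t)) (q := (· ∈ s ∩ t)) (r := (· ∈ s))
    (by grind) (by grind)
  let e := (eUnionLeft.trans ((Equiv.refl _).prodCongr eRight)).symm
  have hassoc : (Equiv.prodAssoc _ _ _).trans e =
      (eUnionRight.trans (eLeft.prodCongr (.refl _))).symm :=
    congrArg Equiv.symm (Equiv.ext fun _ ↦ rfl : e.symm.trans (Equiv.prodAssoc _ _ _).symm =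
      eUnionRight.trans (eLeft.prodCongr (.refl _)))
  have ht : traceLeft ((marginal (s ∪ t) ρ).submatrix e e) =
      (marginal t ρ).submatrix eRight.symm eRight.symm := by
    rw [← traceLeft_marginal (F := s \ t) (G := t) (H := s ∪ t) (by grind) (by grind)]
    rfl
  have hs : traceRight (((marginal (s ∪ t) ρ).submatrix e e).submatrix
      (Equiv.prodAssoc _ _ _) (Equiv.prodAssoc _ _ _)) =
      (marginal s ρ).submatrix eLeft.symm eLeft.symm := by
    rw [← traceRight_marginal (F := s) (G := t \ s) (H := s ∪ t) (by grind) (by grind),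
      submatrix_submatrix, ← Equiv.coe_trans, hassoc]
    rfl
  have hU := posSemidef_marginal hρ (s ∪ t)
  have hssa := vnEntropy_strong_subadditivity (hU.submatrix e)
  rw [ht, hs, traceRight_marginal, vnEntropy_submatrix_equiv e hU.1,
    vnEntropy_submatrix_equiv _ (posSemidef_marginal hρ s).1,
    vnEntropy_submatrix_equiv _ (posSemidef_marginal hρ t).1] at hssa
  exact hssa

end Marginal

theorem card_filter_mem_powersetCard_univ {ι : Type*} [Fintype ι] [DecidableEq ι] {k : ℕ}
    (hk : 1 ≤ k) (i : ι) :
    (((Finset.univ : Finset ι).powersetCard k).filter (i ∈ ·)).card =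
      (Fintype.card ι - 1).choose (k - 1) := by
  simpa using Finset.card_filter_powersetCard_subset {i} Finset.univ k (by simp) (by simpa using hk)

theorem quantum_shearer_full_cover_general {ι κ : Type*} [Fintype ι] [DecidableEq ι] {d : ι → Type*}
    [∀ i, Fintype (d i)] [∀ i, DecidableEq (d i)] {ρ : Matrix (∀ i, d i) (∀ i, d i) ℂ}
    (hρ : ρ.PosSemidef) (J : Finset κ) (A : κ → Finset ι) {r : ℕ}
    (hA : ∀ i, (J.filter (i ∈ A ·)).card = r) :
    r * (vnEntropy ρ - Real.negMulLog ρ.trace.re) ≤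
      ∑ j ∈ J, (vnEntropy (marginal (A j) ρ) - Real.negMulLog ρ.trace.re) := by
  rw [← vnEntropy_marginal_univ hρ.1, ← vnEntropy_marginal_empty hρ, ← nsmul_eq_mul]
  exact nsmul_sub_empty_le_sum_of_submodular (f := fun F ↦ vnEntropy (marginal F ρ))
    (vnEntropy_marginal_union_add_inter_le hρ) J A hA

/-- quantum Shearer inequality, full cover by all `k`-subsets:
`S(ρ) ≤ (1/t) Σ_{|F| = k} S(ρ|_F)` with `t = C(n−1, k−1)`. -/
theorem quantum_shearer_full_cover (n k : ℕ) (hk1 : 1 ≤ k) (hkn : k ≤ n)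
    (ρ : Matrix (Fin n → Fin 2) (Fin n → Fin 2) ℂ)
    (hρ : ρ.PosSemidef) (htr : ρ.trace = 1) :
    vnEntropy ρ ≤
      (1 / (Nat.choose (n - 1) (k - 1) : ℝ)) *
        ∑ F ∈ Finset.univ.powersetCard k, vnEntropy (reducedMat F ρ) := by
  rw [one_div_mul_eq_div, le_div_iff₀' (mod_cast Nat.choose_pos (Nat.sub_le_sub_right hkn 1))]
  simpa [htr, reducedMat_eq_marginal] using quantum_shearer_full_cover_general hρ
    (Finset.univ.powersetCard k) id (card_filter_mem_powersetCard_univ hk1)
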